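/- For every m ≥ 1 and every n ≥ 0, the number of m-bounded 132-avoiding permutations satisfies the lower bound a_n^{(m)} ≥ C_{m−1}^{⌊n/(m+1)⌋}, where C_{m−1} is the (m−1)-st Catalan number. -/

import Mathlib

/-- `π` avoids the pattern 132: there are no indices `i < j < k` with `π i < π k < π j`. -/
def Avoids132 {n : ℕ} (π : Equiv.Perm (Fin n)) : Prop :=
  ¬ ∃ i j k : Fin n, i < j ∧ j < k ∧ π i < π k ∧ π k < π j

/-- `π` is `m`-bounded: adjacent entries differ by at most `m`. -/
def MBounded (m : ℕ) {n : ℕ} (π : Equiv.Perm (Fin n)) : Prop :=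
  ∀ i : ℕ, ∀ h : i + 1 < n,
    |(((π ⟨i + 1, h⟩ : Fin n) : ℕ) : ℤ) - (((π ⟨i, by omega⟩ : Fin n) : ℕ) : ℤ)| ≤ (m : ℤ)

/-- `a_n^{(m)}`: the number of `m`-bounded 132-avoiding permutations of length `n`. -/
noncomputable def aCount (m n : ℕ) : ℕ :=
  Nat.card {π : Equiv.Perm (Fin n) // Avoids132 π ∧ MBounded m π}

/-!
Call a word on `{0, …, n - 1}` linkable if it is an `m`-bounded 132-avoiding permutation that starts
with its maximum and ends with its minimum. In the skew sum of two such words the letters meeting at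
the junction differ by exactly `1`, so the skew sum is linkable again and the number of linkable
words is supermultiplicative in `n`. It is at least `C_{m-1}` for `n = m + 1`: put a maximum before
and a minimum after a 132-avoiding permutation of length `m - 1`, of which the binary trees with
`m - 1` nodes provide `C_{m-1}`; boundedness is then automatic, as all letters lie in `{0, …, m}`.
Cutting `n` into `⌊n / (m + 1)⌋` blocks of length `m + 1` and a remainder, for which the decreasing
word is linkable, gives the bound.
-/

/-- The list `w` avoids the pattern 132: no entries `a, b, c`, in this order of position,
satisfy `a < c < b`. This is the word version of `Avoids132`. -/
def WordAvoids132 {α : Type*} [LT α] (w : List α) : Prop :=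
  w.Triplewise fun a b c => ¬ (a < c ∧ c < b)

/-- Adjacent letters of `w` differ by at most `m`. This is the word version of `MBounded`. -/
def WordMBounded (m : ℕ) (w : List ℕ) : Prop :=
  w.IsChain fun a b : ℕ => |(b : ℤ) - a| ≤ m

/-- The 132-avoiding permutations of `{0, …, n - 1}`, in one-line notation. -/
def avoidingWords (n : ℕ) : Set (List ℕ) :=
  {w | w.Perm (List.range n) ∧ WordAvoids132 w}

/-- The `m`-bounded words in `avoidingWords n` that start with their largest letter `n - 1` and end
with their smallest letter `0`, so that skew sums of such words are again `m`-bounded. The empty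
word is included for `n = 0`. -/
def linkableWords (m n : ℕ) : Set (List ℕ) :=
  {w ∈ avoidingWords n | WordMBounded m w ∧
    (∀ x ∈ w.head?, x + 1 = n) ∧ ∀ x ∈ w.getLast?, x = 0}

section PermRange

variable {n : ℕ} {w : List ℕ}

theorem length_of_perm_range (hw : w.Perm (List.range n)) : w.length = n := by
  simpa using hw.length_eq

theorem nodup_of_perm_range (hw : w.Perm (List.range n)) : w.Nodup :=
  hw.nodup_iff.2 List.nodup_range

theorem lt_of_mem_of_perm_range {x : ℕ} (hw : w.Perm (List.range n)) (hx : x ∈ w) : x < n :=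
  List.mem_range.1 (hw.mem_iff.1 hx)

end PermRange

section OneLine

variable {n : ℕ}

/-- The one-line notation `π 0, …, π (n - 1)` of a permutation. -/
def oneLine (π : Equiv.Perm (Fin n)) : List ℕ :=
  List.ofFn fun i => (π i : ℕ)

theorem exists_oneLine_eq {w : List ℕ} (hw : w.Perm (List.range n)) :
    ∃ π : Equiv.Perm (Fin n), oneLine π = w := by
  obtain rfl := length_of_perm_range hw
  have lt_length (i : Fin w.length) : w[i] < w.length :=
    lt_of_mem_of_perm_range hw (List.getElem_mem i.2)
  have injective : Function.Injective fun i => (⟨w[i], lt_length i⟩ : Fin w.length) :=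
    fun i j hij => Fin.ext <|
      (nodup_of_perm_range hw).getElem_inj_iff.1 (congrArg Fin.val hij)
  exact ⟨Equiv.ofBijective _ (Finite.injective_iff_bijective.1 injective), List.ofFn_getElem⟩

theorem wordAvoids132_oneLine {π : Equiv.Perm (Fin n)} :
    WordAvoids132 (oneLine π) ↔ Avoids132 π := by
  simp only [WordAvoids132, oneLine, List.triplewise_iff_getElem, List.length_ofFn,
    List.getElem_ofFn, Avoids132, not_exists]
  exact ⟨fun h i j k ⟨hij, hjk, hlt⟩ => h i j k hij hjk k.2 hlt,
    fun h i j k hij hjk hk hlt =>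
      h ⟨i, by omega⟩ ⟨j, by omega⟩ ⟨k, hk⟩ ⟨hij, hjk, hlt⟩⟩

theorem wordMBounded_oneLine {m : ℕ} {π : Equiv.Perm (Fin n)} :
    WordMBounded m (oneLine π) ↔ MBounded m π := by
  simp [WordMBounded, oneLine, List.isChain_iff_getElem, MBounded]

end OneLine

theorem finite_avoidingWords (n : ℕ) : (avoidingWords n).Finite :=
  (List.range n).permutations.finite_toSet.subset fun _ hw => List.mem_permutations.2 hw.1

theorem finite_linkableWords (m n : ℕ) : (linkableWords m n).Finite :=
  (finite_avoidingWords n).subset fun _ hw => hw.1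

theorem ncard_linkableWords_le_aCount (m n : ℕ) : (linkableWords m n).ncard ≤ aCount m n := by
  have subset_image : linkableWords m n ⊆
      oneLine '' {π : Equiv.Perm (Fin n) | Avoids132 π ∧ MBounded m π} := by
    rintro w ⟨⟨hperm, havoids⟩, hbounded, -, -⟩
    obtain ⟨π, rfl⟩ := exists_oneLine_eq hperm
    exact ⟨π, ⟨wordAvoids132_oneLine.1 havoids, wordMBounded_oneLine.1 hbounded⟩, rfl⟩
  exact (Set.ncard_le_ncard subset_image (Set.toFinite _)).trans Set.ncard_image_le

namespace WordAvoids132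

variable {α : Type*} [Preorder α] {u v : List α} {a : α}

theorem append (hu : WordAvoids132 u) (hv : WordAvoids132 v) (h : ∀ a ∈ u, ∀ b ∈ v, b < a) :
    WordAvoids132 (u ++ v) :=
  List.triplewise_append.2 ⟨hu, hv,
    fun a ha => List.pairwise_of_forall_mem_list fun _ _ c hc hlt => hlt.1.asymm (h a ha c hc),
    fun c hc => List.pairwise_of_forall_mem_list fun a ha _ _ hlt => hlt.1.asymm (h a ha c hc)⟩

theorem concat (hu : WordAvoids132 u) (h : ∀ b ∈ u, b ≤ a) : WordAvoids132 (u ++ [a]) := by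
  refine List.triplewise_append.2 ⟨hu, List.triplewise_singleton _ _, by simp, ?_⟩
  rintro _ hc
  obtain rfl := List.mem_singleton.1 hc
  exact List.pairwise_of_forall_mem_list fun _ _ b hb hlt => hlt.2.not_ge (h b hb)

end WordAvoids132

section SkewSum

variable {u u' v v' : List ℕ} {k l m : ℕ}

/-- The skew sum `u ⊖ v`: the word `u`, raised above the letters of `v`, followed by `v`. It is
meant for `v` a permutation of `{0, …, v.length - 1}`, whence the shift by `v.length`. -/
def skewSum (u v : List ℕ) : List ℕ :=
  u.map (· + v.length) ++ v

theorem skewSum_inj (h : v.length = v'.length) :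
    skewSum u v = skewSum u' v' ↔ u = u' ∧ v = v' := by
  constructor
  · intro heq
    obtain ⟨hmap, rfl⟩ := List.append_inj' heq h
    exact ⟨List.map_injective_iff.2 (add_left_injective _) hmap, rfl⟩
  · rintro ⟨rfl, rfl⟩
    rfl

theorem skewSum_perm_range (hu : u.Perm (List.range k)) (hv : v.Perm (List.range l)) :
    (skewSum u v).Perm (List.range (k + l)) := by
  have hmap : (u.map (· + v.length)).Perm ((List.range k).map (l + ·)) := by
    simpa only [length_of_perm_range hv, add_comm] using hu.map (· + v.length)
  rw [add_comm, List.range_add]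
  exact (hmap.append hv).trans List.perm_append_comm

theorem WordAvoids132.skewSum (hu : WordAvoids132 u) (hv : WordAvoids132 v)
    (h : ∀ x ∈ v, x < v.length) : WordAvoids132 (skewSum u v) := by
  refine WordAvoids132.append (hu.map fun {a b c} => by simp) hv fun a ha b hb => ?_
  obtain ⟨x, -, rfl⟩ := List.mem_map.1 ha
  exact (h b hb).trans_le (Nat.le_add_left _ _)

theorem WordMBounded.skewSum (hu : WordMBounded m u) (hv : WordMBounded m v)
    (h : ∀ x ∈ u.getLast?, ∀ y ∈ v.head?, |(y : ℤ) - (x + v.length)| ≤ m) :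
    WordMBounded m (skewSum u v) := by
  refine List.isChain_append.2 ⟨?_, hv, ?_⟩
  · simpa [List.isChain_map, WordMBounded] using hu
  · simpa using h

theorem WordMBounded.of_forall_le (h : ∀ x ∈ u, x ≤ m) : WordMBounded m u := by
  refine (List.pairwise_of_forall_mem_list fun a ha b hb => ?_).isChain
  have := h a ha
  have := h b hb
  rw [abs_le]
  omega

theorem skewSum_mem_avoidingWords (hu : u ∈ avoidingWords k) (hv : v ∈ avoidingWords l) :
    skewSum u v ∈ avoidingWords (k + l) :=
  ⟨skewSum_perm_range hu.1 hv.1, hu.2.skewSum hv.2 fun _ hx =>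
    (lt_of_mem_of_perm_range hv.1 hx).trans_eq (length_of_perm_range hv.1).symm⟩

theorem zero_mem_avoidingWords_one : [0] ∈ avoidingWords 1 :=
  ⟨.refl _, List.triplewise_singleton _ _⟩

theorem zero_mem_linkableWords_one (m : ℕ) : [0] ∈ linkableWords m 1 :=
  ⟨zero_mem_avoidingWords_one, List.isChain_singleton _, by simp, by simp⟩

theorem skewSum_mem_linkableWords (hm : 1 ≤ m) (hu : u ∈ linkableWords m k)
    (hv : v ∈ linkableWords m l) : skewSum u v ∈ linkableWords m (k + l) := by
  obtain ⟨hu, hu_bounded, hu_head, hu_last⟩ := hu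
  obtain ⟨hv, hv_bounded, hv_head, hv_last⟩ := hv
  have hlength : v.length = l := length_of_perm_range hv.1
  refine ⟨skewSum_mem_avoidingWords hu hv, hu_bounded.skewSum hv_bounded ?_, ?_, ?_⟩
  · intro x hx y hy
    have := hu_last x hx
    have := hv_head y hy
    rw [abs_le]
    omega
  · rcases u with _ | ⟨a, u⟩
    · obtain rfl : 0 = k := length_of_perm_range hu.1
      simpa [skewSum] using hv_head
    · have := hu_head a rfl
      suffices a + v.length + 1 = k + l by simpa [skewSum]
      omega
  · rcases v.eq_nil_or_concat with rfl | ⟨v, a, rfl⟩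
    · simpa [skewSum] using hu_last
    · simpa [skewSum, ← List.append_assoc] using hv_last

end SkewSum

theorem ncard_linkableWords_mul_le {m : ℕ} (hm : 1 ≤ m) (k l : ℕ) :
    (linkableWords m k).ncard * (linkableWords m l).ncard ≤ (linkableWords m (k + l)).ncard := by
  rw [← Set.ncard_prod]
  refine Set.ncard_le_ncard_of_injOn (fun p => skewSum p.1 p.2)
    (fun p hp => skewSum_mem_linkableWords hm hp.1 hp.2) ?_ (finite_linkableWords m _)
  intro p hp q hq heq
  have hlength : p.2.length = q.2.length := by
    rw [length_of_perm_range hp.2.1.1, length_of_perm_range hq.2.1.1]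
  exact Prod.ext_iff.2 ((skewSum_inj hlength).1 heq)

theorem ncard_linkableWords_pow_mul_le {m : ℕ} (hm : 1 ≤ m) (k r q : ℕ) :
    (linkableWords m k).ncard ^ q * (linkableWords m r).ncard ≤
      (linkableWords m (k * q + r)).ncard := by
  induction q with
  | zero => simp
  | succ q ih =>
    calc (linkableWords m k).ncard ^ (q + 1) * (linkableWords m r).ncard
        = (linkableWords m k).ncard * ((linkableWords m k).ncard ^ q *
            (linkableWords m r).ncard) := by ring
      _ ≤ (linkableWords m k).ncard * (linkableWords m (k * q + r)).ncard := by gcongr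
      _ ≤ (linkableWords m (k + (k * q + r))).ncard := ncard_linkableWords_mul_le hm _ _
      _ = (linkableWords m (k * (q + 1) + r)).ncard := by ring_nf

theorem linkableWords_nonempty {m : ℕ} (hm : 1 ≤ m) (n : ℕ) : (linkableWords m n).Nonempty := by
  induction n with
  | zero => exact ⟨[], ⟨.refl _, .nil⟩, .nil, by simp, by simp⟩
  | succ n ih =>
    obtain ⟨w, hw⟩ := ih
    exact ⟨_, add_comm 1 n ▸ skewSum_mem_linkableWords hm (zero_mem_linkableWords_one m) hw⟩

theorem ncard_avoidingWords_le_ncard_linkableWords {k m : ℕ} (hk : k + 1 ≤ m) :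
    (avoidingWords k).ncard ≤ (linkableWords m (k + 2)).ncard := by
  refine Set.ncard_le_ncard_of_injOn (fun w => skewSum [0] (skewSum w [0])) ?_ ?_
    (finite_linkableWords m _)
  · intro w hw
    have hmem : skewSum [0] (skewSum w [0]) ∈ avoidingWords (k + 2) := by
      have := skewSum_mem_avoidingWords zero_mem_avoidingWords_one
        (skewSum_mem_avoidingWords hw zero_mem_avoidingWords_one)
      rwa [add_comm] at this
    refine ⟨hmem, .of_forall_le fun x hx => ?_, ?_, ?_⟩
    · have := lt_of_mem_of_perm_range hmem.1 hx
      omega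
    · simp [skewSum, length_of_perm_range hw.1]
    · simp [skewSum, List.getLast?_cons]
  · intro w hw w' hw' heq
    have hlength : (skewSum w [0]).length = (skewSum w' [0]).length := by
      simp [skewSum, length_of_perm_range hw.1, length_of_perm_range hw'.1]
    exact ((skewSum_inj rfl).1 ((skewSum_inj hlength).1 heq).2).1

/-- The 132-avoiding permutation of a binary tree `t`, in one-line notation: its largest letter sits
at the root, preceded by the larger and followed by the smaller of the remaining letters. -/
def treeWord : BinaryTree Unit → List ℕ
  | .nil => []
  | .node _ l r => skewSum (treeWord l ++ [l.numNodes]) (treeWord r)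

theorem treeWord_mem_avoidingWords (t : BinaryTree Unit) :
    treeWord t ∈ avoidingWords t.numNodes := by
  induction t with
  | nil => exact ⟨.refl _, .nil⟩
  | node _ l r ihl ihr =>
    have concat_mem : treeWord l ++ [l.numNodes] ∈ avoidingWords (l.numNodes + 1) := by
      refine ⟨?_, ihl.2.concat fun x hx => (lt_of_mem_of_perm_range ihl.1 hx).le⟩
      rw [List.range_succ]
      exact ihl.1.append_right _
    have := skewSum_mem_avoidingWords concat_mem ihr
    rwa [add_right_comm] at this

theorem length_treeWord (t : BinaryTree Unit) : (treeWord t).length = t.numNodes :=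
  length_of_perm_range (treeWord_mem_avoidingWords t).1

theorem treeWord_node (a : Unit) (l r : BinaryTree Unit) :
    treeWord (.node a l r) =
      (treeWord l).map (· + r.numNodes) ++ (l.numNodes + r.numNodes) :: treeWord r := by
  simp [treeWord, skewSum, length_treeWord]

theorem treeWord_injective : Function.Injective treeWord := by
  intro t
  induction t with
  | nil =>
    rintro (_ | ⟨_, l', r'⟩) heq
    · rfl
    · simp [treeWord, skewSum] at heq
  | node a l r ihl ihr =>
    rintro (_ | ⟨_, l', r'⟩) heq
    · simp [treeWord, skewSum] at heq
    have max_eq : l.numNodes + r.numNodes = l'.numNodes + r'.numNodes := by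
      have := congrArg List.length heq
      simpa [length_treeWord, BinaryTree.numNodes] using this
    have max_notMem : l.numNodes + r.numNodes ∉
        (treeWord l).map (· + r.numNodes) ++ treeWord r := by
      have nodup := nodup_of_perm_range (treeWord_mem_avoidingWords (.node a l r)).1
      rw [treeWord_node, List.nodup_middle, List.nodup_cons] at nodup
      exact nodup.1
    rw [List.mem_append, not_or] at max_notMem
    rw [treeWord_node, treeWord_node, ← max_eq,
      List.append_cons_inj_of_notMem max_notMem.1 max_notMem.2] at heq
    obtain ⟨map_eq, -, right_eq⟩ := heq
    obtain rfl := ihr right_eq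
    obtain rfl := ihl (List.map_injective_iff.2 (add_left_injective _) map_eq)
    rfl

theorem catalan_le_ncard_avoidingWords (n : ℕ) : catalan n ≤ (avoidingWords n).ncard := by
  rw [← BinaryTree.treesOfNumNodesEq_card_eq_catalan, ← Set.ncard_coe_finset]
  refine Set.ncard_le_ncard_of_injOn treeWord ?_ treeWord_injective.injOn (finite_avoidingWords n)
  intro t ht
  rw [BinaryTree.coe_treesOfNumNodesEq] at ht
  exact ht ▸ treeWord_mem_avoidingWords t

theorem catalan_lower_bound (m : ℕ) (hm : 1 ≤ m) (n : ℕ) :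
    catalan (m - 1) ^ (n / (m + 1)) ≤ aCount m n := by
  have catalan_le : catalan (m - 1) ≤ (linkableWords m (m + 1)).ncard := by
    obtain ⟨k, rfl⟩ := Nat.exists_eq_add_of_le' hm
    exact (catalan_le_ncard_avoidingWords k).trans
      (ncard_avoidingWords_le_ncard_linkableWords le_rfl)
  have ncard_pos : 0 < (linkableWords m (n % (m + 1))).ncard :=
    (Set.ncard_pos (finite_linkableWords m _)).2 (linkableWords_nonempty hm _)
  calc catalan (m - 1) ^ (n / (m + 1))
      ≤ (linkableWords m (m + 1)).ncard ^ (n / (m + 1)) := by gcongr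
    _ ≤ (linkableWords m (m + 1)).ncard ^ (n / (m + 1)) *
          (linkableWords m (n % (m + 1))).ncard := Nat.le_mul_of_pos_right _ ncard_pos
    _ ≤ (linkableWords m ((m + 1) * (n / (m + 1)) + n % (m + 1))).ncard :=
      ncard_linkableWords_pow_mul_le hm _ _ _
    _ = (linkableWords m n).ncard := by rw [Nat.div_add_mod]
    _ ≤ aCount m n := ncard_linkableWords_le_aCount m n
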